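/- Let W = (W_t)_{t≥0} be a standard one-dimensional Brownian motion and let (L_t(x))_{t≥0,x∈ℝ} be a Brownian local time (occupation density) for W. Fix t > 0 and a ∈ ℝ. Then the distribution of the random variable L_t(a) on the open half-line (0,∞) has density g(y; t, a) = √(2/(π t)) · exp( −(y + |a|)² / (2t) ) with respect to Lebesgue measure; that is, for every Borel set A ⊆ (0,∞), P( L_t(a) ∈ A ) = ∫_A √(2/(π t)) exp( −(y + |a|)²/(2t) ) dy. -/

import Mathlib

open MeasureTheory ProbabilityTheory Filter Set
open scoped ENNReal NNReal

/-- `W` is a standard one-dimensional Brownian motion on `(Ω, F, P)`: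
`W 0 = 0`, measurable coordinates, a.s. continuous paths, Gaussian increments
`W t - W s ~ N(0, t - s)` and independent increments. -/
structure IsBrownianMotion {Ω : Type*} [MeasurableSpace Ω] (P : Measure Ω)
    (W : ℝ → Ω → ℝ) : Prop where
  isProb : IsProbabilityMeasure P
  init : ∀ ω, W 0 ω = 0
  meas : ∀ t, Measurable (W t)
  cont : ∀ᵐ ω ∂P, Continuous fun t => W t ω
  incr_law : ∀ s t : ℝ, 0 ≤ s → s ≤ t →
    Measure.map (fun ω => W t ω - W s ω) P = gaussianReal 0 (Real.toNNReal (t - s))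
  indep_incr : ∀ (n : ℕ) (t : Fin (n + 1) → ℝ), Monotone t → 0 ≤ t 0 →
    iIndepFun
      (fun i : Fin n => fun ω => W (t i.succ) ω - W (t i.castSucc) ω) P

/-- `L` is a Brownian local time (occupation density) for `W`: a nonnegative
random field, jointly continuous in `(t, x)` almost surely, such that almost
surely, for every `t ≥ 0` and every Borel set `B ⊆ ℝ`,
`∫_0^t 1_B (W_s) ds = ∫_B L_t(x) dx`. -/
structure IsLocalTime {Ω : Type*} [MeasurableSpace Ω] (P : Measure Ω)
    (W : ℝ → Ω → ℝ) (L : ℝ → ℝ → Ω → ℝ) : Prop where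
  nonneg : ∀ t x ω, 0 ≤ L t x ω
  meas : ∀ t x, Measurable fun ω => L t x ω
  cont : ∀ᵐ ω ∂P, Continuous fun p : ℝ × ℝ => L p.1 p.2 ω
  occupation : ∀ᵐ ω ∂P, ∀ t : ℝ, 0 ≤ t → ∀ B : Set ℝ, MeasurableSet B →
    ∫⁻ s in Icc (0 : ℝ) t, B.indicator (fun _ => (1 : ℝ≥0∞)) (W s ω) =
      ∫⁻ x in B, ENNReal.ofReal (L t x ω)

/-!
Approximate `L_t(a)` by the integrals `∫ s in 0..t, f (W s)`, where `f` is a mollified Dirac mass at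
`a`. Kac's formula writes the `k`-th moment of such an integral, divided by `k!`, as an iterated
integral of Gaussian transition densities. As `f` concentrates at `a`, this iterated integral
converges to `2 ∫ y in (0, ∞), y ^ k / k! * p_t (y + |a|)`, where `p_t` is the heat kernel, because
`∫ s in (0, t), p_s b * p_{t-s} c = ∫ z in (0, ∞), p_t (b + c + z)` lets each integration in time be
carried out explicitly. The limits are the moments of `(|N| - |a|)⁺` with `N` Gaussian of variance
`t`, and these grow slowly enough for the method of moments to identify the law of `L_t(a)`.
-/

section HeatKernel

/-- The density at `x` of the centred Gaussian law of variance `t`, the transition density of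
Brownian motion. -/
noncomputable def heatKernelReal (t x : ℝ) : ℝ :=
  (√(2 * Real.pi * t))⁻¹ * Real.exp (-x ^ 2 / (2 * t))

/-- The heat kernel as an extended nonnegative real, the form in which it enters Lebesgue
integrals. -/
noncomputable def heatKernel (t x : ℝ) : ℝ≥0∞ := ENNReal.ofReal (heatKernelReal t x)

variable {t : ℝ}

lemma heatKernelReal_nonneg (t x : ℝ) : 0 ≤ heatKernelReal t x := by
  unfold heatKernelReal; positivity

@[fun_prop]
lemma measurable_heatKernelReal_comp {α : Type*} [MeasurableSpace α] {f g : α → ℝ}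
    (hf : Measurable f) (hg : Measurable g) :
    Measurable fun a ↦ heatKernelReal (f a) (g a) := by
  unfold heatKernelReal; fun_prop

@[fun_prop]
lemma measurable_heatKernel_comp {α : Type*} [MeasurableSpace α] {f g : α → ℝ}
    (hf : Measurable f) (hg : Measurable g) : Measurable fun a ↦ heatKernel (f a) (g a) := by
  unfold heatKernel; fun_prop

lemma continuous_heatKernel (t : ℝ) : Continuous (heatKernel t) := by
  unfold heatKernel heatKernelReal
  exact ENNReal.continuous_ofReal.comp (by fun_prop)

lemma heatKernel_neg (t x : ℝ) : heatKernel t (-x) = heatKernel t x := by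
  simp only [heatKernel, heatKernelReal, neg_sq]

lemma heatKernel_abs (t x : ℝ) : heatKernel t |x| = heatKernel t x := by
  simp only [heatKernel, heatKernelReal, sq_abs]

lemma antitoneOn_heatKernel (ht : 0 ≤ t) : AntitoneOn (heatKernel t) (Ici 0) := by
  intro x hx y _ hxy
  have : 0 ≤ x := hx
  unfold heatKernel heatKernelReal
  gcongr

lemma gaussianPDF_eq_heatKernel (ht : 0 ≤ t) (m x : ℝ) :
    gaussianPDF m t.toNNReal x = heatKernel t (x - m) := by
  rw [gaussianPDF, gaussianPDFReal, Real.coe_toNNReal t ht, heatKernel, heatKernelReal]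

lemma lintegral_gaussianReal (ht : 0 < t) (m : ℝ) {φ : ℝ → ℝ≥0∞} (hφ : Measurable φ) :
    ∫⁻ x, φ x ∂gaussianReal m t.toNNReal = ∫⁻ x, heatKernel t (x - m) * φ x := by
  rw [gaussianReal_of_var_ne_zero m (Real.toNNReal_pos.2 ht).ne',
    lintegral_withDensity_eq_lintegral_mul _ (measurable_gaussianPDF m _) hφ]
  simp only [Pi.mul_apply, gaussianPDF_eq_heatKernel ht.le]

lemma lintegral_heatKernel (ht : 0 < t) : ∫⁻ x, heatKernel t x = 1 := by
  simpa using (lintegral_gaussianReal ht 0 (φ := 1) measurable_const).symm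

/-- The left side is the joint density of two independent increments; the right side conditions
on their sum, given which the first one follows the Brownian bridge law. -/
lemma heatKernelReal_mul_heatKernelReal {s r : ℝ} (hs : 0 < s) (hr : 0 < r) (x y : ℝ) :
    heatKernelReal s x * heatKernelReal r y =
      heatKernelReal (s + r) (x + y) *
        heatKernelReal (s * r / (s + r)) ((r * x - s * y) / (s + r)) := by
  unfold heatKernelReal
  rw [mul_mul_mul_comm, mul_mul_mul_comm _ (Real.exp _) _ (Real.exp (-(_ / (s + r)) ^ 2 / _)),
    ← Real.exp_add, ← Real.exp_add, ← mul_inv, ← mul_inv, ← Real.sqrt_mul (by positivity),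
    ← Real.sqrt_mul (by positivity)]
  congr 1
  · congr 2
    field_simp
  · congr 1
    field_simp
    ring

lemma heatKernelReal_sq_mul {c : ℝ} (hc : 0 < c) (t x : ℝ) :
    heatKernelReal (c ^ 2 * t) (c * x) = c⁻¹ * heatKernelReal t x := by
  unfold heatKernelReal
  rw [mul_left_comm _ (c ^ 2), Real.sqrt_mul (sq_nonneg c), Real.sqrt_sq hc.le, mul_inv, mul_assoc,
    mul_pow, mul_left_comm _ (c ^ 2), ← mul_neg, mul_div_mul_left _ _ (pow_pos hc 2).ne']

end HeatKernel

lemma lintegral_cauchySchlomilch {B C : ℝ} (hB : 0 < B) (hC : 0 < C) (g : ℝ → ℝ≥0∞) :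
    ∫⁻ v in Ioi 0, ENNReal.ofReal (B + C / v ^ 2) * g (B * v - C / v) = ∫⁻ y, g y := by
  have hderiv (v : ℝ) (hv : v ∈ Ioi (0 : ℝ)) :
      HasDerivWithinAt (fun v ↦ B * v - C / v) (B + C / v ^ 2) (Ioi 0) v := by
    have hv0 : v ≠ 0 := (mem_Ioi.1 hv).ne'
    refine ((((hasDerivAt_id v).const_mul B).sub
      ((hasDerivAt_const v C).div (hasDerivAt_id v) hv0)).congr_deriv ?_).hasDerivWithinAt
    simp [neg_div]
  have hmono : MonotoneOn (fun v ↦ B * v - C / v) (Ioi 0) := by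
    intro u hu v _ huv
    have : 0 < u := hu
    dsimp only
    gcongr
  have hsurj : (fun v ↦ B * v - C / v) '' Ioi 0 = univ := by
    refine eq_univ_of_forall fun y ↦ ?_
    have hroot : √(y ^ 2 + 4 * B * C) ^ 2 = y ^ 2 + 4 * B * C := Real.sq_sqrt (by positivity)
    have hpos : 0 < y + √(y ^ 2 + 4 * B * C) := by
      have : |y| < √(y ^ 2 + 4 * B * C) :=
        Real.lt_sqrt_of_sq_lt (by rw [sq_abs]; nlinarith [mul_pos hB hC])
      linarith [neg_abs_le y]
    refine ⟨(y + √(y ^ 2 + 4 * B * C)) / (2 * B), div_pos hpos (by positivity), ?_⟩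
    dsimp only
    generalize √(y ^ 2 + 4 * B * C) = r at hroot hpos
    field_simp
    linear_combination hroot
  rw [← lintegral_image_eq_lintegral_deriv_mul_of_monotoneOn measurableSet_Ioi hderiv hmono, hsurj,
    setLIntegral_univ]

lemma lintegral_Ioo_eq_lintegral_Ioi_div_one_add_sq {t : ℝ} (ht : 0 < t) (g : ℝ → ℝ≥0∞) :
    ∫⁻ s in Ioo 0 t, g s =
      ∫⁻ v in Ioi 0, ENNReal.ofReal (2 * t * v / (1 + v ^ 2) ^ 2) * g (t / (1 + v ^ 2)) := by
  have hderiv (v : ℝ) (_ : v ∈ Ioi (0 : ℝ)) :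
      HasDerivWithinAt (fun v ↦ t / (1 + v ^ 2)) (-(2 * t * v / (1 + v ^ 2) ^ 2)) (Ioi 0) v := by
    have hv : 1 + v ^ 2 ≠ 0 := by positivity
    refine (((hasDerivAt_const v t).div (((hasDerivAt_id v).pow 2).const_add 1) hv).congr_deriv
      ?_).hasDerivWithinAt
    simp only [id_eq, Pi.pow_apply]
    push_cast
    ring
  have hanti : AntitoneOn (fun v ↦ t / (1 + v ^ 2)) (Ioi 0) := by
    intro u hu v _ huv
    have : 0 < u := hu
    dsimp only
    gcongr
  have himage : (fun v ↦ t / (1 + v ^ 2)) '' Ioi 0 = Ioo 0 t := by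
    ext s
    constructor
    · rintro ⟨v, hv, rfl⟩
      have : 0 < v := hv
      exact ⟨by positivity, div_lt_self ht (by nlinarith)⟩
    · rintro ⟨hs, hst⟩
      have hpos : 0 < t / s - 1 := by rw [sub_pos, one_lt_div hs]; exact hst
      refine ⟨√(t / s - 1), Real.sqrt_pos.2 hpos, ?_⟩
      dsimp only
      rw [Real.sq_sqrt hpos.le]
      field_simp
      simp
  rw [← himage, lintegral_image_eq_lintegral_deriv_mul_of_antitoneOn measurableSet_Ioi hderiv hanti]
  simp only [neg_neg]

lemma heatKernelReal_mul_heatKernelReal_div_one_add_sq {t v : ℝ} (ht : 0 < t) (hv : 0 < v)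
    (B C : ℝ) :
    heatKernelReal (t / (1 + v ^ 2)) B * heatKernelReal (t - t / (1 + v ^ 2)) C =
      (1 + v ^ 2) / v * (heatKernelReal t (B + C) * heatKernelReal t (B * v - C / v)) := by
  have hr : t - t / (1 + v ^ 2) = v ^ 2 * t / (1 + v ^ 2) := by field_simp; ring
  have hsum : t / (1 + v ^ 2) + v ^ 2 * t / (1 + v ^ 2) = t := by field_simp
  rw [hr, heatKernelReal_mul_heatKernelReal (by positivity) (by positivity), hsum,
    show t / (1 + v ^ 2) * (v ^ 2 * t / (1 + v ^ 2)) / t = (v / (1 + v ^ 2)) ^ 2 * t by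
      field_simp,
    show (v ^ 2 * t / (1 + v ^ 2) * B - t / (1 + v ^ 2) * C) / t =
      v / (1 + v ^ 2) * (B * v - C / v) by field_simp,
    heatKernelReal_sq_mul (by positivity), inv_div]
  ring

/-- The substitution `s = t / (1 + v ^ 2)` reduces the integral to a Cauchy–Schlömilch one. -/
lemma lintegral_firstPassage_convolution {t B C : ℝ} (ht : 0 < t) (hB : 0 < B) (hC : 0 < C) :
    ∫⁻ s in Ioo 0 t, ENNReal.ofReal
        ((B / s + C / (t - s)) * (heatKernelReal s B * heatKernelReal (t - s) C)) =
      2 * heatKernel t (B + C) := by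
  have hsubst (v : ℝ) (hv : v ∈ Ioi (0 : ℝ)) :
      ENNReal.ofReal (2 * t * v / (1 + v ^ 2) ^ 2) *
        ENNReal.ofReal ((B / (t / (1 + v ^ 2)) + C / (t - t / (1 + v ^ 2))) *
          (heatKernelReal (t / (1 + v ^ 2)) B * heatKernelReal (t - t / (1 + v ^ 2)) C)) =
      2 * heatKernel t (B + C) *
        (ENNReal.ofReal (B + C / v ^ 2) * heatKernel t (B * v - C / v)) := by
    have hv0 : 0 < v := hv
    have hr : t - t / (1 + v ^ 2) = v ^ 2 * t / (1 + v ^ 2) := by field_simp; ring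
    have hB0 := heatKernelReal_nonneg t (B + C)
    rw [heatKernelReal_mul_heatKernelReal_div_one_add_sq ht hv0, hr, heatKernel, heatKernel,
      ← ENNReal.ofReal_ofNat, ← ENNReal.ofReal_mul (by positivity),
      ← ENNReal.ofReal_mul (by positivity), ← ENNReal.ofReal_mul (by positivity),
      ← ENNReal.ofReal_mul (by positivity)]
    congr 1
    field_simp
  rw [lintegral_Ioo_eq_lintegral_Ioi_div_one_add_sq ht, setLIntegral_congr_fun measurableSet_Ioi
    hsubst, lintegral_const_mul _ (by fun_prop), lintegral_cauchySchlomilch hB hC,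
    lintegral_heatKernel ht, mul_one]

section Convolution

variable {t s b c : ℝ}

lemma hasDerivAt_heatKernelReal (t x : ℝ) :
    HasDerivAt (heatKernelReal t) (-(x / t) * heatKernelReal t x) x := by
  have hexponent : HasDerivAt (fun x : ℝ ↦ -x ^ 2 / (2 * t)) (-(x / t)) x := by
    refine (((hasDerivAt_id x).pow 2).neg.div_const (2 * t)).congr_deriv ?_
    simp only [id_eq, mul_one, Nat.cast_ofNat, Nat.add_one_sub_one, pow_one]
    rw [← mul_neg, mul_div_mul_left _ _ two_ne_zero, neg_div]
  exact (hexponent.exp.const_mul _).congr_deriv (by unfold heatKernelReal; ring)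

lemma tendsto_heatKernelReal_atTop (ht : 0 < t) : Tendsto (heatKernelReal t) atTop (nhds 0) := by
  have hexponent : Tendsto (fun x : ℝ ↦ -x ^ 2 / (2 * t)) atTop atBot :=
    (tendsto_neg_atTop_atBot.comp (tendsto_pow_atTop two_ne_zero)).atBot_div_const (by positivity)
  unfold heatKernelReal
  simpa using (Real.tendsto_exp_atBot.comp hexponent).const_mul (√(2 * Real.pi * t))⁻¹

lemma heatKernel_mul_heatKernel_eq_lintegral (hs : 0 < s) (ht : 0 < t) (hb : 0 ≤ b)
    (hc : 0 ≤ c) :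
    heatKernel s b * heatKernel t c = ∫⁻ h in Ioi 0, ENNReal.ofReal
      (((b + h) / s + (c + h) / t) * (heatKernelReal s (b + h) * heatKernelReal t (c + h))) := by
  have hderiv (h : ℝ) (_ : h ∈ Ici (0 : ℝ)) :
      HasDerivAt (fun h ↦ -(heatKernelReal s (b + h) * heatKernelReal t (c + h)))
        (((b + h) / s + (c + h) / t) * (heatKernelReal s (b + h) * heatKernelReal t (c + h))) h :=
    (((hasDerivAt_heatKernelReal s (b + h)).comp_const_add b h).mul
      ((hasDerivAt_heatKernelReal t (c + h)).comp_const_add c h)).neg.congr_deriv (by ring)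
  have hnonneg (h : ℝ) (hh : h ∈ Ioi (0 : ℝ)) : 0 ≤
      ((b + h) / s + (c + h) / t) * (heatKernelReal s (b + h) * heatKernelReal t (c + h)) := by
    have : 0 < h := hh
    have := heatKernelReal_nonneg s (b + h)
    have := heatKernelReal_nonneg t (c + h)
    positivity
  have hlim : Tendsto (fun h ↦ -(heatKernelReal s (b + h) * heatKernelReal t (c + h))) atTop
      (nhds 0) := by
    simpa using (((tendsto_heatKernelReal_atTop hs).comp (tendsto_atTop_add_const_left _ b
      tendsto_id)).mul ((tendsto_heatKernelReal_atTop ht).comp (tendsto_atTop_add_const_left _ c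
      tendsto_id))).neg
  rw [← ofReal_integral_eq_lintegral_ofReal (integrableOn_Ioi_deriv_of_nonneg' hderiv hnonneg hlim)
    (ae_restrict_of_forall_mem measurableSet_Ioi hnonneg),
    integral_Ioi_of_hasDerivAt_of_nonneg' hderiv hnonneg hlim]
  simp only [add_zero, zero_sub, neg_neg, heatKernel,
    ENNReal.ofReal_mul (heatKernelReal_nonneg _ _)]

lemma lintegral_Ioi_comp_mul_left {c : ℝ} (hc : 0 < c) (g : ℝ → ℝ≥0∞) :
    ∫⁻ x in Ioi 0, ENNReal.ofReal c * g (c * x) = ∫⁻ y in Ioi 0, g y := by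
  have himage : (fun x ↦ c * x) '' Ioi 0 = Ioi 0 := by
    rw [image_mul_left_Ioi hc, mul_zero]
  conv_rhs => rw [← himage]
  exact (lintegral_image_eq_lintegral_deriv_mul_of_monotoneOn measurableSet_Ioi
    (fun x _ ↦ ((hasDerivAt_id x).const_mul c).hasDerivWithinAt.congr_deriv (mul_one c))
    (fun x _ y _ hxy ↦ mul_le_mul_of_nonneg_left hxy hc.le) g).symm

lemma lintegral_heatKernel_mul_heatKernel (ht : 0 < t) (hb : 0 ≤ b) (hc : 0 ≤ c) :
    ∫⁻ s in Ioo 0 t, heatKernel s b * heatKernel (t - s) c =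
      ∫⁻ z in Ioi 0, heatKernel t (b + c + z) := by
  calc ∫⁻ s in Ioo 0 t, heatKernel s b * heatKernel (t - s) c
      = ∫⁻ s in Ioo 0 t, ∫⁻ h in Ioi 0, ENNReal.ofReal (((b + h) / s + (c + h) / (t - s)) *
          (heatKernelReal s (b + h) * heatKernelReal (t - s) (c + h))) :=
        setLIntegral_congr_fun measurableSet_Ioo fun s hs ↦
          heatKernel_mul_heatKernel_eq_lintegral hs.1 (sub_pos.2 hs.2) hb hc
    _ = ∫⁻ h in Ioi 0, ∫⁻ s in Ioo 0 t, ENNReal.ofReal (((b + h) / s + (c + h) / (t - s)) *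
          (heatKernelReal s (b + h) * heatKernelReal (t - s) (c + h))) :=
        lintegral_lintegral_swap (by fun_prop)
    _ = ∫⁻ h in Ioi 0, ENNReal.ofReal 2 * heatKernel t (b + c + 2 * h) := by
        refine setLIntegral_congr_fun measurableSet_Ioi fun h hh ↦ ?_
        have : 0 < h := hh
        rw [lintegral_firstPassage_convolution ht (by positivity) (by positivity),
          ENNReal.ofReal_ofNat]
        ring_nf
    _ = ∫⁻ z in Ioi 0, heatKernel t (b + c + z) :=
        lintegral_Ioi_comp_mul_left two_pos fun z ↦ heatKernel t (b + c + z)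

end Convolution

section MethodOfMoments

/-- The `k`-th moment of a measure carried by `[0, ∞)`, divided by `k!`. -/
noncomputable def dividedMoment (μ : Measure ℝ) (k : ℕ) : ℝ≥0∞ :=
  ∫⁻ x, ENNReal.ofReal (x ^ k / k.factorial) ∂μ

variable {μ ν : Measure ℝ}

lemma dividedMoment_zero [IsProbabilityMeasure μ] : dividedMoment μ 0 = 1 := by
  simp [dividedMoment]

lemma tsum_pow_mul_dividedMoment (hμ : ∀ᵐ x ∂μ, 0 ≤ x) (r : ℝ≥0) :
    ∑' k, (r : ℝ≥0∞) ^ k * dividedMoment μ k = ∫⁻ x, ENNReal.ofReal (Real.exp (r * x)) ∂μ := by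
  have hterm (k : ℕ) : (r : ℝ≥0∞) ^ k * dividedMoment μ k =
      ∫⁻ x, (r : ℝ≥0∞) ^ k * ENNReal.ofReal (x ^ k / k.factorial) ∂μ :=
    (lintegral_const_mul _ (by fun_prop)).symm
  simp_rw [hterm]
  rw [← lintegral_tsum fun k ↦ by fun_prop]
  refine lintegral_congr_ae (hμ.mono fun x hx ↦ ?_)
  have hexp : HasSum (fun k : ℕ ↦ (r * x) ^ k / k.factorial) (Real.exp (r * x)) := by
    rw [Real.exp_eq_exp_ℝ]
    exact NormedSpace.expSeries_div_hasSum_exp _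
  dsimp only
  rw [← hexp.tsum_eq, ENNReal.ofReal_tsum_of_nonneg (fun k ↦ by positivity) hexp.summable]
  refine tsum_congr fun k ↦ ?_
  rw [mul_pow, mul_div_assoc, ENNReal.ofReal_mul (by positivity), ENNReal.ofReal_pow r.coe_nonneg,
    ENNReal.ofReal_coe_nnreal]

lemma integral_pow_div_factorial (hμ : ∀ᵐ x ∂μ, 0 ≤ x) (k : ℕ) :
    ∫ x, x ^ k / k.factorial ∂μ = (dividedMoment μ k).toReal :=
  integral_eq_lintegral_of_nonneg_ae (hμ.mono fun x hx ↦ by dsimp; positivity)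
    (by fun_prop : Measurable fun x : ℝ ↦ x ^ k / k.factorial).aestronglyMeasurable

lemma charFun_eq_tsum_dividedMoment (hμ : ∀ᵐ x ∂μ, 0 ≤ x) {ξ : ℝ}
    (hξ : ∑' k, ‖ξ‖ₑ ^ k * dividedMoment μ k ≠ ∞) :
    charFun μ ξ = ∑' k, (ξ * Complex.I) ^ k * ((dividedMoment μ k).toReal : ℂ) := by
  have hexp (x : ℝ) : Complex.exp (ξ * x * Complex.I) =
      ∑' k : ℕ, (ξ * Complex.I) ^ k * ((x ^ k / k.factorial : ℝ) : ℂ) := by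
    rw [Complex.exp_eq_exp_ℂ, NormedSpace.exp_eq_tsum_div]
    refine tsum_congr fun k ↦ ?_
    push_cast
    ring
  have hmeas (k : ℕ) : Measurable fun x : ℝ ↦
      (ξ * Complex.I) ^ k * ((x ^ k / k.factorial : ℝ) : ℂ) := by fun_prop
  have hnorm (k : ℕ) : ∫⁻ x, ‖(ξ * Complex.I) ^ k * ((x ^ k / k.factorial : ℝ) : ℂ)‖ₑ ∂μ =
      ‖ξ‖ₑ ^ k * dividedMoment μ k := by
    rw [dividedMoment, ← lintegral_const_mul _ (by fun_prop)]
    refine lintegral_congr_ae (hμ.mono fun x hx ↦ ?_)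
    have hxk : 0 ≤ x ^ k / k.factorial := by positivity
    dsimp only
    rw [← ofReal_norm, norm_mul, norm_pow, norm_mul, Complex.norm_I, mul_one, Complex.norm_real,
      Complex.norm_real, Real.norm_of_nonneg hxk, ENNReal.ofReal_mul (by positivity),
      ENNReal.ofReal_pow (norm_nonneg ξ), ofReal_norm]
  rw [charFun_apply_real]
  simp_rw [hexp]
  rw [integral_tsum (fun k ↦ (hmeas k).aestronglyMeasurable) (by simpa only [hnorm] using hξ)]
  refine tsum_congr fun k ↦ ?_
  rw [integral_const_mul, integral_complex_ofReal, integral_pow_div_factorial hμ]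

lemma tendsto_charFun_of_tendsto_dividedMoment {ι : Type*} {l : Filter ι} [l.NeBot]
    {μ : ι → Measure ℝ} (hμ : ∀ i, ∀ᵐ x ∂μ i, 0 ≤ x) (hν : ∀ᵐ x ∂ν, 0 ≤ x) {M : ℕ → ℝ≥0∞}
    (hM : ∀ r : ℝ≥0, ∑' k, (r : ℝ≥0∞) ^ k * M k ≠ ∞) (hμM : ∀ i k, dividedMoment (μ i) k ≤ M k)
    (hμν : ∀ k, Tendsto (fun i ↦ dividedMoment (μ i) k) l (nhds (dividedMoment ν k))) (ξ : ℝ) :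
    Tendsto (fun i ↦ charFun (μ i) ξ) l (nhds (charFun ν ξ)) := by
  have hνM (k : ℕ) : dividedMoment ν k ≤ M k := le_of_tendsto' (hμν k) fun i ↦ hμM i k
  have hMξ : ∑' k, ‖ξ‖ₑ ^ k * M k ≠ ∞ := hM ‖ξ‖₊
  have hMtop (k : ℕ) : M k ≠ ∞ := by
    simpa using ENNReal.ne_top_of_tsum_ne_top (hM 1) k
  have hseries {m : Measure ℝ} (hm : ∀ᵐ x ∂m, 0 ≤ x) (hmM : ∀ k, dividedMoment m k ≤ M k) :
      charFun m ξ = ∑' k, (ξ * Complex.I) ^ k * ((dividedMoment m k).toReal : ℂ) :=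
    charFun_eq_tsum_dividedMoment hm <| ne_top_of_le_ne_top hMξ <|
      ENNReal.tsum_le_tsum fun k ↦ mul_le_mul_right (hmM k) _
  simp_rw [fun i ↦ hseries (hμ i) (hμM i), hseries hν hνM]
  refine tendsto_tsum_of_dominated_convergence (ENNReal.summable_toReal hMξ) (fun k ↦ ?_)
    (Eventually.of_forall fun i k ↦ ?_)
  · exact ((Complex.continuous_ofReal.tendsto _).comp ((ENNReal.tendsto_toReal
      (ne_top_of_le_ne_top (hMtop k) (hνM k))).comp (hμν k))).const_mul _
  · rw [norm_mul, norm_pow, norm_mul, Complex.norm_I, mul_one, Complex.norm_real, Complex.norm_real,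
      Real.norm_of_nonneg ENNReal.toReal_nonneg, ENNReal.toReal_mul, ENNReal.toReal_pow,
      toReal_enorm]
    gcongr
    exacts [hMtop k, hμM i k]

lemma map_eq_of_tendsto_dividedMoment {Ω : Type*} [MeasurableSpace Ω] {P : Measure Ω}
    [IsProbabilityMeasure P] [IsProbabilityMeasure ν] {X : ℕ → Ω → ℝ} {Y : Ω → ℝ}
    (hX : ∀ n, AEMeasurable (X n) P) (hX0 : ∀ n, ∀ᵐ ω ∂P, 0 ≤ X n ω)
    (hXY : ∀ᵐ ω ∂P, Tendsto (fun n ↦ X n ω) atTop (nhds (Y ω)))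
    (hν : ∀ᵐ x ∂ν, 0 ≤ x) {M : ℕ → ℝ≥0∞} (hM : ∀ r : ℝ≥0, ∑' k, (r : ℝ≥0∞) ^ k * M k ≠ ∞)
    (hXM : ∀ n k, dividedMoment (P.map (X n)) k ≤ M k)
    (hXν : ∀ k, Tendsto (fun n ↦ dividedMoment (P.map (X n)) k) atTop (nhds (dividedMoment ν k))) :
    P.map Y = ν := by
  have hY : AEMeasurable Y P := aemeasurable_of_tendsto_metrizable_ae atTop hX hXY
  have hdistr := (tendstoInDistribution_of_ae_tendsto hX hY hXY).tendsto
  have := Measure.isProbabilityMeasure_map (μ := P) hY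
  refine Measure.ext_of_charFun (funext fun ξ ↦ tendsto_nhds_unique
    (ProbabilityMeasure.tendsto_iff_tendsto_charFun.1 hdistr ξ)
    (tendsto_charFun_of_tendsto_dividedMoment (fun n ↦ ?_) hν hM hXM hXν ξ))
  exact (ae_map_iff (hX n) measurableSet_Ici).2 (hX0 n)

end MethodOfMoments

section RepeatedIntegration

lemma lintegral_Ioi_add_left (g : ℝ → ℝ≥0∞) (a b : ℝ) :
    ∫⁻ x in Ioi a, g (b + x) = ∫⁻ y in Ioi (b + a), g y := by
  rw [← lintegral_indicator measurableSet_Ioi, ← lintegral_indicator measurableSet_Ioi,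
    ← lintegral_add_left_eq_self ((Ioi (b + a)).indicator g) b]
  simp only [indicator_apply, mem_Ioi, add_lt_add_iff_left]

lemma lintegral_Ioi_lintegral_Ioi_swap (a : ℝ) {F : ℝ → ℝ → ℝ≥0∞}
    (hF : Measurable (Function.uncurry F)) :
    ∫⁻ y in Ioi a, ∫⁻ w in Ioi y, F y w = ∫⁻ w in Ioi a, ∫⁻ y in Ioo a w, F y w := by
  have hset : MeasurableSet {p : ℝ × ℝ | p.1 < p.2} :=
    measurableSet_lt measurable_fst measurable_snd
  calc ∫⁻ y in Ioi a, ∫⁻ w in Ioi y, F y w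
      = ∫⁻ y in Ioi a, ∫⁻ w in Ioi a,
          {p : ℝ × ℝ | p.1 < p.2}.indicator (Function.uncurry F) (y, w) := by
        refine setLIntegral_congr_fun measurableSet_Ioi fun y hy ↦ ?_
        rw [← inter_eq_left.2 (Ioi_subset_Ioi (mem_Ioi.1 hy).le),
          ← setLIntegral_indicator measurableSet_Ioi]
        rfl
    _ = ∫⁻ w in Ioi a, ∫⁻ y in Ioi a,
          {p : ℝ × ℝ | p.1 < p.2}.indicator (Function.uncurry F) (y, w) :=
        lintegral_lintegral_swap (hF.indicator hset).aemeasurable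
    _ = ∫⁻ w in Ioi a, ∫⁻ y in Ioo a w, F y w := by
        refine lintegral_congr fun w ↦ ?_
        rw [← Iio_inter_Ioi, ← setLIntegral_indicator measurableSet_Iio]
        rfl

lemma lintegral_Ioo_pow_div_factorial (k : ℕ) {x : ℝ} (hx : 0 ≤ x) :
    ∫⁻ y in Ioo 0 x, ENNReal.ofReal (y ^ k / k.factorial) =
      ENNReal.ofReal (x ^ (k + 1) / (k + 1).factorial) := by
  have hcont : Continuous fun y : ℝ ↦ y ^ k / k.factorial := by fun_prop
  rw [← ofReal_integral_eq_lintegral_ofReal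
    ((hcont.integrableOn_Icc (a := 0) (b := x)).mono_set Ioo_subset_Icc_self)
    (ae_restrict_of_forall_mem measurableSet_Ioo fun y hy ↦ by have := hy.1; positivity),
    ← integral_Ioc_eq_integral_Ioo, ← intervalIntegral.integral_of_le hx,
    intervalIntegral.integral_div, integral_pow, Nat.factorial_succ]
  push_cast
  congr 1
  field_simp
  simp

/-- **Cauchy's formula for repeated integration**. -/
lemma lintegral_pow_div_factorial_mul_lintegral_add (k : ℕ) {h : ℝ → ℝ≥0∞} (hh : Measurable h) :
    ∫⁻ y in Ioi 0, ENNReal.ofReal (y ^ k / k.factorial) * ∫⁻ z in Ioi 0, h (y + z) =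
      ∫⁻ w in Ioi 0, ENNReal.ofReal (w ^ (k + 1) / (k + 1).factorial) * h w := by
  simp_rw [lintegral_Ioi_add_left h 0, add_zero, ← lintegral_const_mul _ hh]
  rw [lintegral_Ioi_lintegral_Ioi_swap 0 (by fun_prop)]
  refine setLIntegral_congr_fun measurableSet_Ioi fun w hw ↦ ?_
  rw [lintegral_mul_const _ (by fun_prop), lintegral_Ioo_pow_div_factorial k (mem_Ioi.1 hw).le]

end RepeatedIntegration

section TailMoment

variable {t : ℝ}

/-- `E[((|N| - b)⁺) ^ k / k!; |N| > b]` for a centred Gaussian `N` of variance `t`. These numbers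
play the role of the divided moments of the local time at distance `b` from the starting point. -/
noncomputable def tailMoment (k : ℕ) (t b : ℝ) : ℝ≥0∞ :=
  ∫⁻ y in Ioi 0, ENNReal.ofReal (y ^ k / k.factorial) * (2 * heatKernel t (y + b))

lemma antitoneOn_tailMoment (k : ℕ) (ht : 0 ≤ t) : AntitoneOn (tailMoment k t) (Ici 0) := by
  intro b hb c _ hbc
  refine setLIntegral_mono' measurableSet_Ioi fun y hy ↦ ?_
  have : 0 ≤ b := hb
  have : 0 < y := hy
  gcongr _ * (2 * ?_)
  exact antitoneOn_heatKernel ht (mem_Ici.2 (by positivity)) (mem_Ici.2 (by linarith))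
    (by gcongr)

/-- One step of the Kac recursion: the time of a visit at distance `b` is integrated out. -/
lemma lintegral_heatKernel_mul_tailMoment (k : ℕ) {b c : ℝ} (ht : 0 < t) (hb : 0 ≤ b)
    (hc : 0 ≤ c) :
    ∫⁻ s in Ioo 0 t, heatKernel s b * tailMoment k (t - s) c = tailMoment (k + 1) t (b + c) := by
  calc ∫⁻ s in Ioo 0 t, heatKernel s b * tailMoment k (t - s) c
      = ∫⁻ s in Ioo 0 t, ∫⁻ y in Ioi 0, ENNReal.ofReal (y ^ k / k.factorial) *
          (2 * (heatKernel s b * heatKernel (t - s) (y + c))) := by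
        refine lintegral_congr fun s ↦ ?_
        rw [tailMoment, ← lintegral_const_mul _ (by fun_prop)]
        exact lintegral_congr fun y ↦ by ring
    _ = ∫⁻ y in Ioi 0, ∫⁻ s in Ioo 0 t, ENNReal.ofReal (y ^ k / k.factorial) *
          (2 * (heatKernel s b * heatKernel (t - s) (y + c))) :=
        lintegral_lintegral_swap (by fun_prop)
    _ = ∫⁻ y in Ioi 0, ENNReal.ofReal (y ^ k / k.factorial) *
          ∫⁻ z in Ioi 0, 2 * heatKernel t (y + z + (b + c)) := by
        refine setLIntegral_congr_fun measurableSet_Ioi fun y hy ↦ ?_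
        have : 0 < y := hy
        rw [lintegral_const_mul _ (by fun_prop), lintegral_const_mul _ (by fun_prop),
          lintegral_heatKernel_mul_heatKernel ht hb (by positivity),
          lintegral_const_mul _ (by fun_prop)]
        ring_nf
    _ = tailMoment (k + 1) t (b + c) :=
        lintegral_pow_div_factorial_mul_lintegral_add k
          (h := fun w ↦ 2 * heatKernel t (w + (b + c))) (by fun_prop)

lemma lintegral_gaussianReal_comp_abs (ht : 0 < t) {φ : ℝ → ℝ≥0∞} (hφ : Measurable φ) :
    ∫⁻ x, φ |x| ∂gaussianReal 0 t.toNNReal = ∫⁻ x in Ioi 0, φ x * (2 * heatKernel t x) := by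
  have hsymm : ∫⁻ x in Iic 0, heatKernel t x * φ |x| = ∫⁻ x in Ioi 0, heatKernel t x * φ |x| := by
    rw [← setLIntegral_congr Iio_ae_eq_Iic, ← lintegral_indicator measurableSet_Iio,
      ← lintegral_indicator measurableSet_Ioi, ← lintegral_neg_eq_self]
    simp only [indicator_apply, mem_Iio, mem_Ioi, neg_lt_zero, abs_neg, heatKernel_neg]
  have hφabs : Measurable fun x : ℝ ↦ φ |x| := hφ.comp measurable_norm
  rw [lintegral_gaussianReal ht 0 hφabs]
  simp only [sub_zero]
  rw [← lintegral_add_compl _ measurableSet_Ioi, compl_Ioi, hsymm, ← two_mul,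
    ← lintegral_const_mul _ (by fun_prop)]
  refine setLIntegral_congr_fun measurableSet_Ioi fun x hx ↦ ?_
  simp only [abs_of_pos (mem_Ioi.1 hx)]
  ring

lemma dividedMoment_map_abs_gaussianReal (ht : 0 < t) (k : ℕ) :
    dividedMoment ((gaussianReal 0 t.toNNReal).map fun x ↦ |x|) k = tailMoment k t 0 := by
  rw [dividedMoment, lintegral_map (by fun_prop) (by fun_prop),
    lintegral_gaussianReal_comp_abs ht (φ := fun x ↦ ENNReal.ofReal (x ^ k / k.factorial))
      (by fun_prop)]
  simp only [tailMoment, add_zero]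

lemma tailMoment_zero_zero (ht : 0 < t) : tailMoment 0 t 0 = 1 := by
  have := Measure.isProbabilityMeasure_map (μ := gaussianReal 0 t.toNNReal)
    (f := fun x ↦ |x|) (by fun_prop)
  rw [← dividedMoment_map_abs_gaussianReal ht, dividedMoment_zero]

lemma tsum_pow_mul_tailMoment_ne_top (ht : 0 < t) (r : ℝ≥0) :
    ∑' k, (r : ℝ≥0∞) ^ k * tailMoment k t 0 ≠ ∞ := by
  simp_rw [← dividedMoment_map_abs_gaussianReal ht]
  rw [tsum_pow_mul_dividedMoment ((ae_map_iff (by fun_prop) measurableSet_Ici).2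
    (ae_of_all _ abs_nonneg)), lintegral_map (by fun_prop) (by fun_prop)]
  exact (integrable_exp_mul_abs (integrable_exp_mul_gaussianReal _)
    (integrable_exp_mul_gaussianReal _)).lintegral_lt_top.ne

lemma tailMoment_ne_top (ht : 0 < t) (k : ℕ) : tailMoment k t 0 ≠ ∞ := by
  simpa using ENNReal.ne_top_of_tsum_ne_top (tsum_pow_mul_tailMoment_ne_top ht 1) k

lemma tendsto_tailMoment {ι : Type*} {l : Filter ι} [l.IsCountablyGenerated] (k : ℕ) (ht : 0 < t)
    {u : ι → ℝ} {b : ℝ} (hu : ∀ i, 0 ≤ u i) (hub : Tendsto u l (nhds b)) :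
    Tendsto (fun i ↦ tailMoment k t (u i)) l (nhds (tailMoment k t b)) := by
  refine tendsto_lintegral_filter_of_dominated_convergence
    (fun y ↦ ENNReal.ofReal (y ^ k / k.factorial) * (2 * heatKernel t (y + 0)))
    (Eventually.of_forall fun i ↦ by fun_prop) (Eventually.of_forall fun i ↦ ?_)
    (tailMoment_ne_top ht k) (ae_of_all _ fun y ↦ ?_)
  · refine ae_restrict_of_forall_mem measurableSet_Ioi fun y hy ↦ ?_
    have : 0 < y := hy
    have := hu i
    gcongr _ * (2 * ?_)
    exact antitoneOn_heatKernel ht.le (mem_Ici.2 (by positivity)) (mem_Ici.2 (by positivity))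
      (by gcongr)
  · refine ENNReal.Tendsto.const_mul (ENNReal.Tendsto.const_mul ?_ (Or.inr ENNReal.ofNat_ne_top))
      (Or.inr ENNReal.ofReal_ne_top)
    exact ((continuous_heatKernel t).tendsto _).comp (hub.const_add y)

end TailMoment

section ExcessLaw

/-- The law of `(|N| - b)⁺` for a centred Gaussian `N` of variance `t`; it is the law of the local
time at distance `b` from the starting point. -/
noncomputable def excessLaw (t b : ℝ) : Measure ℝ :=
  (gaussianReal 0 t.toNNReal).map fun x ↦ max (|x| - b) 0

variable {t b : ℝ}

instance (t b : ℝ) : IsProbabilityMeasure (excessLaw t b) :=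
  Measure.isProbabilityMeasure_map (by fun_prop)

lemma ae_excessLaw_nonneg (t b : ℝ) : ∀ᵐ y ∂excessLaw t b, 0 ≤ y :=
  (ae_map_iff (by fun_prop) measurableSet_Ici).2 (ae_of_all _ fun _ ↦ le_max_right _ _)

lemma lintegral_excessLaw (ht : 0 < t) (hb : 0 ≤ b) {φ : ℝ → ℝ≥0∞} (hφ : Measurable φ)
    (hφ0 : φ 0 = 0) :
    ∫⁻ y, φ y ∂excessLaw t b = ∫⁻ y in Ioi 0, φ y * (2 * heatKernel t (y + b)) := by
  rw [excessLaw, lintegral_map hφ (by fun_prop), lintegral_gaussianReal_comp_abs ht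
    (φ := fun x ↦ φ (max (x - b) 0)) (by fun_prop), ← lintegral_indicator measurableSet_Ioi,
    ← lintegral_indicator measurableSet_Ioi, ← lintegral_add_right_eq_self _ b]
  refine lintegral_congr fun y ↦ ?_
  simp only [indicator_apply, mem_Ioi, add_sub_cancel_right]
  rcases lt_or_ge 0 y with hy | hy
  · rw [if_pos (by positivity), if_pos hy, max_eq_left hy.le]
  · rw [if_neg hy.not_gt, max_eq_right hy, hφ0, zero_mul, ite_self]

lemma dividedMoment_excessLaw (ht : 0 < t) (hb : 0 ≤ b) {k : ℕ} (hk : k ≠ 0) :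
    dividedMoment (excessLaw t b) k = tailMoment k t b :=
  lintegral_excessLaw ht hb (by fun_prop) (by simp [hk])

lemma two_mul_heatKernel (ht : 0 < t) (x : ℝ) :
    2 * heatKernel t x =
      ENNReal.ofReal (√(2 / (Real.pi * t)) * Real.exp (-x ^ 2 / (2 * t))) := by
  have hsqrt : √(2 / (Real.pi * t)) = 2 * (√(2 * Real.pi * t))⁻¹ := by
    rw [← Real.sqrt_inv, ← Real.sqrt_sq zero_le_two, ← Real.sqrt_mul (by norm_num),
      Real.sqrt_sq zero_le_two]
    congr 1
    field_simp
  rw [hsqrt, mul_assoc, ENNReal.ofReal_mul zero_le_two, ENNReal.ofReal_ofNat]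
  rfl

lemma excessLaw_apply (ht : 0 < t) (hb : 0 ≤ b) {A : Set ℝ} (hA : A ⊆ Ioi 0)
    (hAm : MeasurableSet A) :
    excessLaw t b A = ∫⁻ y in A,
      ENNReal.ofReal (√(2 / (Real.pi * t)) * Real.exp (-(y + b) ^ 2 / (2 * t))) := by
  have h0 : (0 : ℝ) ∉ A := fun h ↦ lt_irrefl 0 (mem_Ioi.1 (hA h))
  calc excessLaw t b A = ∫⁻ y, A.indicator 1 y ∂excessLaw t b := (lintegral_indicator_one hAm).symm
    _ = ∫⁻ y in Ioi 0, A.indicator (fun y ↦ 2 * heatKernel t (y + b)) y := by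
      rw [lintegral_excessLaw ht hb (measurable_one.indicator hAm) (indicator_of_notMem h0 _)]
      refine lintegral_congr fun y ↦ ?_
      by_cases hy : y ∈ A <;> simp [hy]
    _ = ∫⁻ y in A, 2 * heatKernel t (y + b) := by
      rw [setLIntegral_indicator hAm, inter_eq_left.2 hA]
    _ = _ := by simp only [two_mul_heatKernel ht]

end ExcessLaw

section KacMoment

/-- Kac's iterated integrals: for Brownian motion `W` started at `x` and `μ = f(y) dy`, this is the
`k`-th moment of `∫ r in 0..t, f (W r)` divided by `k!`, obtained by integrating out the first of
`k` ordered sampling times. -/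
noncomputable def kacMoment (μ : Measure ℝ) : ℕ → ℝ → ℝ → ℝ≥0∞
  | 0, _, _ => 1
  | k + 1, t, x => ∫⁻ r in Ioo 0 t, ∫⁻ y, heatKernel r (y - x) * kacMoment μ k (t - r) y ∂μ

variable {μ : Measure ℝ} {t a ε : ℝ}

lemma measurable_lintegral_Ioo {α : Type*} [MeasurableSpace α] {F : α → ℝ → ℝ≥0∞}
    {f g : α → ℝ} (hF : Measurable (Function.uncurry F)) (hf : Measurable f) (hg : Measurable g) :
    Measurable fun a ↦ ∫⁻ r in Ioo (f a) (g a), F a r := by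
  have hset : MeasurableSet {p : α × ℝ | f p.1 < p.2 ∧ p.2 < g p.1} :=
    (measurableSet_lt (by fun_prop) measurable_snd).inter
      (measurableSet_lt measurable_snd (by fun_prop))
  convert (hF.indicator hset).lintegral_prod_right' (ν := volume) using 2 with a
  rw [← lintegral_indicator measurableSet_Ioo]
  rfl

lemma measurable_kacMoment (μ : Measure ℝ) [SFinite μ] (k : ℕ) :
    Measurable (Function.uncurry (kacMoment μ k)) := by
  induction k with
  | zero => exact measurable_const
  | succ k ih =>
    have hinner : Measurable fun p : ((ℝ × ℝ) × ℝ) × ℝ ↦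
        heatKernel p.1.2 (p.2 - p.1.1.2) * kacMoment μ k (p.1.1.1 - p.1.2) p.2 :=
      (by fun_prop : Measurable fun p : ((ℝ × ℝ) × ℝ) × ℝ ↦ heatKernel p.1.2 (p.2 - p.1.1.2)).mul
        (ih.comp (by fun_prop : Measurable fun p : ((ℝ × ℝ) × ℝ) × ℝ ↦ (p.1.1.1 - p.1.2, p.2)))
    exact measurable_lintegral_Ioo (hinner.lintegral_prod_right' (ν := μ)) measurable_const
      measurable_fst

lemma heatKernel_le_heatKernel (ht : 0 ≤ t) {x y : ℝ} (hxy : |x| ≤ |y|) :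
    heatKernel t y ≤ heatKernel t x := by
  rw [← heatKernel_abs t x, ← heatKernel_abs t y]
  exact antitoneOn_heatKernel ht (abs_nonneg x) (abs_nonneg y) hxy

lemma kacMoment_le [IsProbabilityMeasure μ] (k : ℕ) (ht : 0 < t) (x : ℝ) :
    kacMoment μ k t x ≤ tailMoment k t 0 := by
  induction k generalizing t x with
  | zero => exact (tailMoment_zero_zero ht).ge
  | succ k ih =>
    rw [← add_zero (0 : ℝ), ← lintegral_heatKernel_mul_tailMoment k ht le_rfl le_rfl]
    refine setLIntegral_mono' measurableSet_Ioo fun r hr ↦ ?_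
    calc ∫⁻ y, heatKernel r (y - x) * kacMoment μ k (t - r) y ∂μ
        ≤ ∫⁻ _, heatKernel r 0 * tailMoment k (t - r) 0 ∂μ := by
          gcongr with y
          · exact heatKernel_le_heatKernel hr.1.le (by simp)
          · exact ih (sub_pos.2 hr.2) y
      _ = heatKernel r 0 * tailMoment k (t - r) 0 := by simp

lemma kacMoment_succ_le [IsProbabilityMeasure μ] (hμ : ∀ᵐ y ∂μ, |y - a| ≤ ε) (k : ℕ)
    (ht : 0 < t) (x : ℝ) :
    kacMoment μ (k + 1) t x ≤ tailMoment (k + 1) t (max (|x - a| - ε) 0) := by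
  rw [← add_zero (max _ _), ← lintegral_heatKernel_mul_tailMoment k ht (le_max_right _ _) le_rfl]
  refine setLIntegral_mono' measurableSet_Ioo fun r hr ↦ ?_
  calc ∫⁻ y, heatKernel r (y - x) * kacMoment μ k (t - r) y ∂μ
      ≤ ∫⁻ _, heatKernel r (max (|x - a| - ε) 0) * tailMoment k (t - r) 0 ∂μ := by
        refine lintegral_mono_ae (hμ.mono fun y hy ↦ ?_)
        gcongr
        · refine heatKernel_le_heatKernel hr.1.le ?_
          rw [abs_of_nonneg (le_max_right _ _), abs_sub_comm y x]
          exact max_le (by linarith [abs_sub_le x y a]) (abs_nonneg _)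
        · exact kacMoment_le k (sub_pos.2 hr.2) y
    _ = heatKernel r (max (|x - a| - ε) 0) * tailMoment k (t - r) 0 := by simp

lemma le_kacMoment [IsProbabilityMeasure μ] (hε : 0 ≤ ε) (hμ : ∀ᵐ y ∂μ, |y - a| ≤ ε) (k : ℕ)
    (ht : 0 < t) (x : ℝ) : tailMoment k t (|x - a| + 2 * k * ε) ≤ kacMoment μ k t x := by
  induction k generalizing t x with
  | zero =>
    calc tailMoment 0 t (|x - a| + 2 * (0 : ℕ) * ε)
        ≤ tailMoment 0 t 0 := antitoneOn_tailMoment 0 ht.le self_mem_Ici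
          (mem_Ici.2 (by positivity)) (by positivity)
      _ = kacMoment μ 0 t x := tailMoment_zero_zero ht
  | succ k ih =>
    have hsplit : |x - a| + 2 * (k + 1 : ℕ) * ε = (|x - a| + ε) + (ε + 2 * k * ε) := by
      push_cast; ring
    rw [hsplit, ← lintegral_heatKernel_mul_tailMoment k ht (by positivity) (by positivity)]
    refine setLIntegral_mono' measurableSet_Ioo fun r hr ↦ ?_
    calc heatKernel r (|x - a| + ε) * tailMoment k (t - r) (ε + 2 * k * ε)
        = ∫⁻ _, heatKernel r (|x - a| + ε) * tailMoment k (t - r) (ε + 2 * k * ε) ∂μ := by simp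
      _ ≤ ∫⁻ y, heatKernel r (y - x) * kacMoment μ k (t - r) y ∂μ := by
        refine lintegral_mono_ae (hμ.mono fun y hy ↦ ?_)
        gcongr
        · refine heatKernel_le_heatKernel hr.1.le ?_
          rw [abs_of_nonneg (by positivity : 0 ≤ |x - a| + ε), abs_sub_comm x a]
          linarith [abs_sub_le y a x]
        · refine le_trans (antitoneOn_tailMoment k (sub_pos.2 hr.2).le (mem_Ici.2 (by positivity))
            (mem_Ici.2 (by positivity)) ?_) (ih (sub_pos.2 hr.2) y)
          gcongr

lemma tendsto_kacMoment {ι : Type*} {l : Filter ι} [l.IsCountablyGenerated] {μ : ι → Measure ℝ}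
    [∀ i, IsProbabilityMeasure (μ i)] {ε : ι → ℝ} (hε : ∀ i, 0 ≤ ε i) (hε0 : Tendsto ε l (nhds 0))
    (hμ : ∀ i, ∀ᵐ y ∂μ i, |y - a| ≤ ε i) {k : ℕ} (hk : k ≠ 0) (ht : 0 < t) (x : ℝ) :
    Tendsto (fun i ↦ kacMoment (μ i) k t x) l (nhds (tailMoment k t |x - a|)) := by
  obtain ⟨k, rfl⟩ := Nat.exists_eq_succ_of_ne_zero hk
  have hlower : Tendsto (fun i ↦ |x - a| + 2 * (k + 1 : ℕ) * ε i) l (nhds |x - a|) := by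
    simpa using (hε0.const_mul (2 * ((k + 1 : ℕ) : ℝ))).const_add |x - a|
  have hupper : Tendsto (fun i ↦ max (|x - a| - ε i) 0) l (nhds |x - a|) := by
    simpa using (hε0.const_sub |x - a|).max (tendsto_const_nhds (x := (0 : ℝ)))
  refine tendsto_of_tendsto_of_tendsto_of_le_of_le
    (tendsto_tailMoment (k + 1) ht (fun i ↦ ?_) hlower)
    (tendsto_tailMoment (k + 1) ht (fun i ↦ le_max_right _ _) hupper)
    (fun i ↦ le_kacMoment (hε i) (hμ i) (k + 1) ht x) (fun i ↦ kacMoment_succ_le (hμ i) k ht x)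
  have := hε i
  positivity

end KacMoment

section AdditiveFunctional

lemma continuous_integral_left_endpoint {h : ℝ → ℝ} (hh : Continuous h) (t : ℝ) :
    Continuous fun r ↦ ∫ u in r..t, h u := by
  simp_rw [intervalIntegral.integral_symm t]
  exact (intervalIntegral.continuous_primitive (fun _ _ ↦ hh.intervalIntegrable _ _) t).neg

lemma measurable_integral_left_endpoint {Ω : Type*} [MeasurableSpace Ω] {h : ℝ → Ω → ℝ}
    (hm : ∀ r, Measurable (h r)) (hc : ∀ ω, Continuous fun r ↦ h r ω) (t : ℝ) :
    Measurable fun p : ℝ × Ω ↦ ∫ u in p.1..t, h u p.2 := by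
  refine measurable_uncurry_of_continuous_of_measurable (u := fun r ω ↦ ∫ u in r..t, h u ω)
    (fun ω ↦ continuous_integral_left_endpoint (hc ω) t) fun r ↦ ?_
  have hjoint : StronglyMeasurable fun p : Ω × ℝ ↦ h p.2 p.1 :=
    ((measurable_uncurry_of_continuous_of_measurable hc hm).comp measurable_swap).stronglyMeasurable
  exact (hjoint.integral_prod_right'.sub hjoint.integral_prod_right').measurable

lemma ofReal_integral_pow_succ_div_factorial {h : ℝ → ℝ} (hh : Continuous h) (hh0 : ∀ r, 0 ≤ h r)
    (k : ℕ) {s t : ℝ} (hst : s ≤ t) :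
    ENNReal.ofReal ((∫ u in s..t, h u) ^ (k + 1) / (k + 1).factorial) = ∫⁻ r in Ioo s t,
      ENNReal.ofReal (h r) * ENNReal.ofReal ((∫ u in r..t, h u) ^ k / k.factorial) := by
  have hderiv (r : ℝ) : HasDerivAt (fun r ↦ ∫ u in r..t, h u) (-h r) r :=
    intervalIntegral.integral_hasDerivAt_left (hh.intervalIntegrable _ _)
      hh.aestronglyMeasurable.stronglyMeasurableAtFilter hh.continuousAt
  have hcont := continuous_integral_left_endpoint hh t
  have hprim (r : ℝ) : HasDerivAt (fun r ↦ -((∫ u in r..t, h u) ^ (k + 1) / (k + 1).factorial))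
      (h r * ((∫ u in r..t, h u) ^ k / k.factorial)) r := by
    refine (((hderiv r).pow (k + 1)).div_const _).neg.congr_deriv ?_
    rw [Nat.factorial_succ]
    push_cast
    field_simp
  have hnonneg (r : ℝ) (hr : r ∈ Ioo s t) :
      0 ≤ h r * ((∫ u in r..t, h u) ^ k / k.factorial) := by
    have := hh0 r
    have := intervalIntegral.integral_nonneg (μ := volume) hr.2.le fun u _ ↦ hh0 u
    positivity
  have hintegrand : Continuous fun r ↦ h r * ((∫ u in r..t, h u) ^ k / k.factorial) := by fun_prop
  simp_rw [← ENNReal.ofReal_mul (hh0 _)]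
  rw [← ofReal_integral_eq_lintegral_ofReal
      (hintegrand.integrableOn_Icc.mono_set Ioo_subset_Icc_self)
      (ae_restrict_of_forall_mem measurableSet_Ioo hnonneg),
    ← integral_Ioc_eq_integral_Ioo, ← intervalIntegral.integral_of_le hst,
    intervalIntegral.integral_eq_sub_of_hasDerivAt (fun r _ ↦ hprim r)
      (hintegrand.intervalIntegrable _ _)]
  simp

end AdditiveFunctional

lemma lintegral_mul_lintegral_swap {α β : Type*} [MeasurableSpace α] [MeasurableSpace β]
    {μ : Measure α} {ν : Measure β} [SFinite μ] [SFinite ν] {Z : α → ℝ≥0∞} (hZ : Measurable Z)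
    {F : α → β → ℝ≥0∞} (hF : Measurable (Function.uncurry F)) :
    ∫⁻ a, Z a * (∫⁻ b, F a b ∂ν) ∂μ = ∫⁻ b, (∫⁻ a, Z a * F a b ∂μ) ∂ν := by
  simp_rw [← lintegral_const_mul _ hF.of_uncurry_left]
  exact lintegral_lintegral_swap ((hZ.comp measurable_fst).mul hF).aemeasurable

lemma kacMoment_succ_sub (μ : Measure ℝ) (k : ℕ) (s t x : ℝ) :
    kacMoment μ (k + 1) (t - s) x =
      ∫⁻ r in Ioo s t, ∫⁻ y, heatKernel (r - s) (y - x) * kacMoment μ k (t - r) y ∂μ := by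
  rw [kacMoment, ← lintegral_indicator measurableSet_Ioo, ← lintegral_indicator measurableSet_Ioo,
    ← lintegral_sub_right_eq_self _ s]
  simp only [indicator_apply, mem_Ioo, sub_pos, sub_lt_sub_iff_right, sub_sub_sub_cancel_right]

namespace IsBrownianMotion

variable {Ω : Type*} [mΩ : MeasurableSpace Ω] {P : Measure Ω} {W : ℝ → Ω → ℝ}

lemma isPreBrownianReal (hW : IsBrownianMotion P W) :
    IsPreBrownianReal (fun q : ℝ≥0 ↦ W q) P := by
  refine HasIndepIncrements.isPreBrownianReal_of_hasLaw
    (fun q ↦ ⟨(hW.meas q).aemeasurable, ?_⟩) fun n t ht ↦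
    hW.indep_incr n (fun i ↦ t i) (fun i j hij ↦ NNReal.coe_le_coe.2 (ht hij)) (t 0).2
  simpa [hW.init] using hW.incr_law 0 q le_rfl q.2

lemma congr {W' : ℝ → Ω → ℝ} (hW : IsBrownianMotion P W) (h0 : ∀ ω, W' 0 ω = 0)
    (hm : ∀ t, Measurable (W' t)) (hWW' : ∀ᵐ ω ∂P, ∀ t, W t ω = W' t ω) :
    IsBrownianMotion P W' where
  isProb := hW.isProb
  init := h0
  meas := hm
  cont := by
    filter_upwards [hW.cont, hWW'] with ω hcont hω
    simpa only [hω] using hcont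
  incr_law s t hs hst := by
    rw [← hW.incr_law s t hs hst]
    exact Measure.map_congr (hWW'.mono fun ω hω ↦ by simp only [hω])
  indep_incr n t ht ht0 := (hW.indep_incr n t ht ht0).congr fun i ↦
    hWW'.mono fun ω hω ↦ by simp only [hω]

lemma exists_forall_continuous (hW : IsBrownianMotion P W) :
    ∃ W' : ℝ → Ω → ℝ, IsBrownianMotion P W' ∧ (∀ ω, Continuous fun t ↦ W' t ω) ∧
      ∀ᵐ ω ∂P, ∀ t, W t ω = W' t ω := by
  classical
  obtain ⟨N, hN, hNm, hN0⟩ := exists_measurable_superset_of_null (ae_iff.1 hW.cont)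
  have hWW' : ∀ᵐ ω ∂P, ∀ t, W t ω = if ω ∈ N then 0 else W t ω :=
    (measure_eq_zero_iff_ae_notMem.1 hN0).mono fun ω hω t ↦ (if_neg hω).symm
  refine ⟨fun t ω ↦ if ω ∈ N then 0 else W t ω,
    hW.congr (fun ω ↦ by simp only [hW.init, ite_self])
      (fun t ↦ Measurable.ite hNm measurable_const (hW.meas t)) hWW', fun ω ↦ ?_, hWW'⟩
  by_cases hω : ω ∈ N
  · simpa only [hω, if_true] using continuous_const
  · simpa only [hω, if_false] using not_not.1 fun h ↦ hω (hN h)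

/-- The natural filtration of Brownian motion, indexed by the nonnegative reals. -/
noncomputable def filtration (hW : IsBrownianMotion P W) : Filtration ℝ≥0 mΩ :=
  Filtration.natural (fun q : ℝ≥0 ↦ W q) fun q ↦ (hW.meas q).stronglyMeasurable

lemma measurable_filtration (hW : IsBrownianMotion P W) (s : ℝ≥0) :
    Measurable[hW.filtration s] (W s) :=
  (Filtration.stronglyAdapted_natural fun q : ℝ≥0 ↦ (hW.meas q).stronglyMeasurable)
    s |>.measurable

lemma indep_filtration_sub (hW : IsBrownianMotion P W) {s r : ℝ≥0} (hsr : s ≤ r) :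
    Indep (hW.filtration s) (MeasurableSpace.comap (fun ω ↦ W r ω - W s ω) inferInstance) P := by
  have hshift := (IndepFun_iff_Indep ..).1 (hW.isPreBrownianReal.indepFun_shift s).symm
  rw [filtration, Filtration.natural_eq_comap]
  refine indep_of_indep_of_le_right hshift (measurable_iff_comap_le.1 ?_)
  have heval := (measurable_pi_apply (X := fun _ ↦ ℝ) (r - s)).comp
    (comap_measurable fun ω (q : ℝ≥0) ↦ W ↑(s + q) ω - W s ω)
  simpa only [Function.comp_def, add_tsub_cancel_of_le hsr] using heval

/-- The Markov property at time `s`. -/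
lemma lintegral_mul_comp (hW : IsBrownianMotion P W) {s r : ℝ≥0} (hsr : s < r) {Z : Ω → ℝ≥0∞}
    (hZ : Measurable[hW.filtration s] Z) {g : ℝ → ℝ≥0∞} (hg : Measurable g) :
    ∫⁻ ω, Z ω * g (W r ω) ∂P =
      ∫⁻ ω, Z ω * (∫⁻ y, heatKernel (r - s) (y - W s ω) * g y) ∂P := by
  have := hW.isProb
  have hpast : Measurable fun ω ↦ (Z ω, W s ω) :=
    (hZ.mono (hW.filtration.le s) le_rfl).prodMk (hW.meas s)
  have hincr : Measurable fun ω ↦ W r ω - W s ω := (hW.meas r).sub (hW.meas s)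
  have hindep : IndepFun (fun ω ↦ (Z ω, W s ω)) (fun ω ↦ W r ω - W s ω) P :=
    (IndepFun_iff_Indep ..).2 <| indep_of_indep_of_le_left (hW.indep_filtration_sub hsr.le)
      (measurable_iff_comap_le.1 (hZ.prodMk (hW.measurable_filtration s)))
  have hF : Measurable fun p : (ℝ≥0∞ × ℝ) × ℝ ↦ p.1.1 * g (p.1.2 + p.2) := by fun_prop
  have hgauss (w : ℝ) : ∫⁻ d, g (w + d) ∂gaussianReal 0 (r - s : ℝ).toNNReal =
      ∫⁻ y, heatKernel (r - s) (y - w) * g y := by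
    rw [← lintegral_gaussianReal (sub_pos.2 (NNReal.coe_lt_coe.2 hsr)) w hg,
      ← lintegral_map hg (measurable_const_add w), gaussianReal_map_const_add, zero_add]
  calc ∫⁻ ω, Z ω * g (W r ω) ∂P
      = ∫⁻ ω, Z ω * g (W s ω + (W r ω - W s ω)) ∂P := by simp only [add_sub_cancel]
    _ = ∫⁻ p, p.1.1 * g (p.1.2 + p.2) ∂(P.map fun ω ↦ (Z ω, W s ω)).prod
          (P.map fun ω ↦ W r ω - W s ω) := by
        rw [← hindep.map_prod_eq_prod_map_map hpast.aemeasurable hincr.aemeasurable,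
          lintegral_map hF (hpast.prodMk hincr)]
    _ = ∫⁻ ω, ∫⁻ d, Z ω * g (W s ω + d) ∂gaussianReal 0 (r - s : ℝ).toNNReal ∂P := by
        rw [lintegral_prod _ hF.aemeasurable, hW.incr_law s r s.2 hsr.le,
          lintegral_map hF.lintegral_prod_right' hpast]
    _ = ∫⁻ ω, Z ω * (∫⁻ y, heatKernel (r - s) (y - W s ω) * g y) ∂P := by
        refine lintegral_congr fun ω ↦ ?_
        rw [lintegral_const_mul _ (by fun_prop), hgauss]

lemma lintegral_mul_density_mul_comp (hW : IsBrownianMotion P W) {s r : ℝ≥0} (hsr : s < r)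
    {Z : Ω → ℝ≥0∞} (hZ : Measurable[hW.filtration s] Z) {φ g : ℝ → ℝ≥0∞} (hφ : Measurable φ)
    (hg : Measurable g) :
    ∫⁻ ω, Z ω * (φ (W r ω) * g (W r ω)) ∂P =
      ∫⁻ ω, Z ω * (∫⁻ y, heatKernel (r - s) (y - W s ω) * g y ∂volume.withDensity φ) ∂P := by
  refine (hW.lintegral_mul_comp hsr hZ (hφ.mul hg)).trans (lintegral_congr fun ω ↦ ?_)
  rw [lintegral_withDensity_eq_lintegral_mul _ hφ (by fun_prop)]
  simp only [Pi.mul_apply, mul_left_comm]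

/-- Kac's moment formula: condition on the first of the `k + 1` ordered sampling times. -/
lemma lintegral_mul_ofReal_integral_pow (hW : IsBrownianMotion P W)
    (hc : ∀ ω, Continuous fun t ↦ W t ω) {f : ℝ → ℝ} (hf : Continuous f) (hf0 : ∀ y, 0 ≤ f y)
    (k : ℕ) {s : ℝ≥0} {t : ℝ} (hst : s ≤ t) {Z : Ω → ℝ≥0∞} (hZ : Measurable[hW.filtration s] Z) :
    ∫⁻ ω, Z ω * ENNReal.ofReal ((∫ r in s..t, f (W r ω)) ^ k / k.factorial) ∂P =
      ∫⁻ ω, Z ω * kacMoment (volume.withDensity fun y ↦ ENNReal.ofReal (f y)) k (t - s) (W s ω)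
        ∂P := by
  have := hW.isProb
  induction k generalizing s Z with
  | zero => simp [kacMoment]
  | succ k ih =>
    set μ := volume.withDensity fun y ↦ ENNReal.ofReal (f y)
    have hZm : Measurable Z := hZ.mono (hW.filtration.le s) le_rfl
    have hfm : Measurable fun y ↦ ENNReal.ofReal (f y) := hf.measurable.ennreal_ofReal
    have hWm := hW.meas s
    have hkac := measurable_kacMoment μ k
    have hfW : Measurable fun p : Ω × ℝ ↦ f (W p.2 p.1) :=
      hf.measurable.comp <|
        (measurable_uncurry_of_continuous_of_measurable hc hW.meas).comp measurable_swap
    have hint : Measurable fun p : Ω × ℝ ↦ ∫ u in p.2..t, f (W u p.1) :=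
      (measurable_integral_left_endpoint (fun r ↦ hf.measurable.comp (hW.meas r))
        (fun ω ↦ hf.comp (hc ω)) t).comp measurable_swap
    have hker : Measurable fun p : Ω × ℝ ↦
        ∫⁻ y, heatKernel (p.2 - s) (y - W s p.1) * kacMoment μ k (t - p.2) y ∂μ :=
      Measurable.lintegral_prod_right' (f := fun p : (Ω × ℝ) × ℝ ↦
        heatKernel (p.1.2 - s) (p.2 - W s p.1.1) * kacMoment μ k (t - p.1.2) p.2) (by fun_prop)
    have hsplit (ω : Ω) := ofReal_integral_pow_succ_div_factorial (h := fun r ↦ f (W r ω))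
      (hf.comp (hc ω)) (fun r ↦ hf0 _) k hst
    simp_rw [hsplit, kacMoment_succ_sub]
    rw [lintegral_mul_lintegral_swap hZm
        (hfW.ennreal_ofReal.mul ((hint.pow_const k).div_const _).ennreal_ofReal),
      lintegral_mul_lintegral_swap hZm hker]
    refine setLIntegral_congr_fun measurableSet_Ioo fun r hr ↦ ?_
    lift r to ℝ≥0 using s.2.trans hr.1.le
    have hZr : Measurable[hW.filtration r] fun ω ↦ Z ω * ENNReal.ofReal (f (W r ω)) :=
      (hZ.mono (hW.filtration.mono hr.1.le) le_rfl).mul (hfm.comp (hW.measurable_filtration r))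
    have hkac_r := ih hr.2.le hZr
    simp only [mul_assoc] at hkac_r
    exact hkac_r.trans (hW.lintegral_mul_density_mul_comp hr.1 hZ hfm (by fun_prop))

lemma measurable_integral_comp (hW : IsBrownianMotion P W)
    (hc : ∀ ω, Continuous fun t ↦ W t ω) {f : ℝ → ℝ} (hf : Continuous f) (t : ℝ) :
    Measurable fun ω ↦ ∫ s in 0..t, f (W s ω) :=
  (measurable_integral_left_endpoint (fun r ↦ hf.measurable.comp (hW.meas r))
    (fun ω ↦ hf.comp (hc ω)) t).comp measurable_prodMk_left

lemma dividedMoment_map_integral (hW : IsBrownianMotion P W)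
    (hc : ∀ ω, Continuous fun t ↦ W t ω) {f : ℝ → ℝ} (hf : Continuous f) (hf0 : ∀ y, 0 ≤ f y)
    (k : ℕ) {t : ℝ} (ht : 0 ≤ t) :
    dividedMoment (P.map fun ω ↦ ∫ s in 0..t, f (W s ω)) k =
      kacMoment (volume.withDensity fun y ↦ ENNReal.ofReal (f y)) k t 0 := by
  have := hW.isProb
  rw [dividedMoment, lintegral_map (by fun_prop) (hW.measurable_integral_comp hc hf t)]
  simpa [hW.init] using
    hW.lintegral_mul_ofReal_integral_pow hc hf hf0 k (s := 0) ht (Z := fun _ ↦ 1) measurable_const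

end IsBrownianMotion

section OccupationDensity

/-- `ℓ` is a continuous density of the occupation measure of the path `w` over `[0, t]`, i.e. of
the push-forward of Lebesgue measure on `[0, t]` under `w`. -/
structure IsOccupationDensity (w : ℝ → ℝ) (t : ℝ) (ℓ : ℝ → ℝ) : Prop where
  continuous : Continuous ℓ
  nonneg : ∀ x, 0 ≤ ℓ x
  map_eq : (volume.restrict (Icc 0 t)).map w = volume.withDensity fun x ↦ ENNReal.ofReal (ℓ x)

lemma IsOccupationDensity.integral_comp {w ℓ f : ℝ → ℝ} {t : ℝ} (hℓ : IsOccupationDensity w t ℓ)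
    (hw : Measurable w) (hf : Measurable f) (ht : 0 ≤ t) :
    ∫ s in 0..t, f (w s) = ∫ y, f y * ℓ y := by
  rw [intervalIntegral.integral_of_le ht, ← integral_Icc_eq_integral_Ioc,
    ← integral_map hw.aemeasurable hf.aestronglyMeasurable, hℓ.map_eq,
    integral_withDensity_eq_integral_toReal_smul hℓ.continuous.measurable.ennreal_ofReal
      (ae_of_all _ fun _ ↦ ENNReal.ofReal_lt_top)]
  simp only [ENNReal.toReal_ofReal (hℓ.nonneg _), smul_eq_mul, mul_comm]

lemma IsLocalTime.ae_isOccupationDensity {Ω : Type*} [MeasurableSpace Ω] {P : Measure Ω}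
    {W : ℝ → Ω → ℝ} {L : ℝ → ℝ → Ω → ℝ} (hL : IsLocalTime P W L)
    (hW : ∀ᵐ ω ∂P, Measurable fun s ↦ W s ω) {t : ℝ} (ht : 0 ≤ t) :
    ∀ᵐ ω ∂P, IsOccupationDensity (fun s ↦ W s ω) t fun x ↦ L t x ω := by
  filter_upwards [hL.cont, hL.occupation, hW] with ω hcont hocc hmeas
  refine ⟨by fun_prop, fun x ↦ hL.nonneg t x ω, ?_⟩
  ext B hB
  rw [Measure.map_apply hmeas hB, withDensity_apply _ hB, ← hocc t ht B hB,
    ← lintegral_indicator_one (hmeas hB)]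
  rfl

end OccupationDensity

section Mollifier

/-- The bump function at `0` supported in `[-1/(n+1), 1/(n+1)]`. -/
noncomputable def shrinkingBump (n : ℕ) : ContDiffBump (0 : ℝ) where
  rIn := 1 / (n + 1) / 2
  rOut := 1 / (n + 1)
  rIn_pos := by positivity
  rIn_lt_rOut := half_lt_self (by positivity)

/-- The mollified Dirac mass at `a`, of total mass one and supported in
`[a - 1/(n+1), a + 1/(n+1)]`. -/
noncomputable def mollifier (a : ℝ) (n : ℕ) (y : ℝ) : ℝ := (shrinkingBump n).normed volume (a - y)

lemma continuous_mollifier (a : ℝ) (n : ℕ) : Continuous (mollifier a n) :=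
  (shrinkingBump n).continuous_normed.comp (continuous_const.sub continuous_id)

lemma mollifier_nonneg (a : ℝ) (n : ℕ) (y : ℝ) : 0 ≤ mollifier a n y :=
  (shrinkingBump n).nonneg_normed _

lemma tendsto_integral_mollifier_mul {g : ℝ → ℝ} (hg : Continuous g) (a : ℝ) :
    Tendsto (fun n ↦ ∫ y, mollifier a n y * g y) atTop (nhds (g a)) := by
  have hconv := ContDiffBump.convolution_tendsto_right_of_continuous (μ := volume)
    (φ := shrinkingBump) tendsto_one_div_add_atTop_nhds_zero_nat hg a
  simpa only [convolution_eq_swap, mollifier, ContinuousLinearMap.lsmul_apply, smul_eq_mul]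
    using hconv

/-- The law with density `mollifier a n`, which approximates the Dirac mass at `a`. -/
noncomputable def mollifiedDirac (a : ℝ) (n : ℕ) : Measure ℝ :=
  volume.withDensity fun y ↦ ENNReal.ofReal (mollifier a n y)

instance isProbabilityMeasure_mollifiedDirac (a : ℝ) (n : ℕ) :
    IsProbabilityMeasure (mollifiedDirac a n) := by
  refine ⟨?_⟩
  have hint : Integrable (mollifier a n) :=
    ((shrinkingBump n).integrable_normed (μ := volume)).comp_sub_left a
  rw [mollifiedDirac, withDensity_apply _ .univ, setLIntegral_univ,
    ← ofReal_integral_eq_lintegral_ofReal hint (ae_of_all _ (mollifier_nonneg a n))]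
  simp only [mollifier]
  rw [integral_sub_left_eq_self, ContDiffBump.integral_normed, ENNReal.ofReal_one]

lemma ae_mollifiedDirac_abs_sub_le (a : ℝ) (n : ℕ) :
    ∀ᵐ y ∂mollifiedDirac a n, |y - a| ≤ 1 / (n + 1) := by
  rw [mollifiedDirac, ae_withDensity_iff (continuous_mollifier a n).measurable.ennreal_ofReal]
  refine ae_of_all _ fun y hy ↦ ?_
  have hsupp : a - y ∈ Function.support ((shrinkingBump n).normed volume) :=
    fun h ↦ hy (by rw [mollifier, h, ENNReal.ofReal_zero])
  rw [ContDiffBump.support_normed_eq, mem_ball_zero_iff, Real.norm_eq_abs, abs_sub_comm] at hsupp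
  exact hsupp.le

end Mollifier

section LocalTime

variable {Ω : Type*} [MeasurableSpace Ω] {P : Measure Ω} {W : ℝ → Ω → ℝ}

theorem local_time_density_general (hW : IsBrownianMotion P W) {t : ℝ} (ht : 0 < t)
    {ℓ : ℝ → Ω → ℝ} (hℓ : ∀ᵐ ω ∂P, IsOccupationDensity (fun s ↦ W s ω) t fun x ↦ ℓ x ω) (a : ℝ) :
    P.map (ℓ a) = excessLaw t |a| := by
  obtain ⟨W', hW', hc, hWW'⟩ := hW.exists_forall_continuous
  have hmom (n k : ℕ) : dividedMoment (P.map fun ω ↦ ∫ s in 0..t, mollifier a n (W' s ω)) k =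
      kacMoment (mollifiedDirac a n) k t 0 :=
    hW'.dividedMoment_map_integral hc (continuous_mollifier a n) (mollifier_nonneg a n) k ht.le
  have := hW'.isProb
  refine map_eq_of_tendsto_dividedMoment (M := fun k ↦ tailMoment k t 0)
    (X := fun n ω ↦ ∫ s in 0..t, mollifier a n (W' s ω))
    (fun n ↦ (hW'.measurable_integral_comp hc (continuous_mollifier a n) t).aemeasurable)
    (fun n ↦ ae_of_all _ fun ω ↦ intervalIntegral.integral_nonneg ht.le fun s _ ↦
      mollifier_nonneg a n _) ?_ (ae_excessLaw_nonneg t |a|)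
    (tsum_pow_mul_tailMoment_ne_top ht) (fun n k ↦ ?_) fun k ↦ ?_
  · filter_upwards [hℓ, hWW'] with ω hω hWω
    simp only [hWω] at hω
    simp only [hω.integral_comp (hc ω).measurable (continuous_mollifier a _).measurable ht.le]
    exact tendsto_integral_mollifier_mul hω.continuous a
  · rw [hmom]
    exact kacMoment_le k ht 0
  · simp only [hmom]
    obtain rfl | hk := eq_or_ne k 0
    · simp only [kacMoment, dividedMoment_zero, tendsto_const_nhds]
    · rw [dividedMoment_excessLaw ht (abs_nonneg a) hk]
      simpa only [zero_sub, abs_neg] using tendsto_kacMoment (fun n : ℕ ↦ by positivity)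
        tendsto_one_div_add_atTop_nhds_zero_nat (ae_mollifiedDirac_abs_sub_le a) hk ht 0

end LocalTime

/-- The distribution of `L_t(a)` on `(0,∞)` has Lebesgue density
`g(y; t, a) = √(2/(πt)) exp(−(y + |a|)²/(2t))`: for every Borel `A ⊆ (0,∞)`,
`P(L_t(a) ∈ A) = ∫_A g(y; t, a) dy`. -/
theorem local_time_density
    {Ω : Type*} [MeasurableSpace Ω] (P : Measure Ω) (W : ℝ → Ω → ℝ)
    (L : ℝ → ℝ → Ω → ℝ) (hW : IsBrownianMotion P W) (hL : IsLocalTime P W L)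
    (t : ℝ) (ht : 0 < t) (a : ℝ) :
    ∀ A : Set ℝ, A ⊆ Ioi 0 → MeasurableSet A →
      P {ω | L t a ω ∈ A} =
        ∫⁻ y in A,
          ENNReal.ofReal
            (Real.sqrt (2 / (Real.pi * t)) *
              Real.exp (-(y + |a|) ^ 2 / (2 * t))) := by
  intro A hA hAm
  have hℓ := hL.ae_isOccupationDensity (hW.cont.mono fun _ hc ↦ hc.measurable) ht.le
  rw [← excessLaw_apply ht (abs_nonneg a) hA hAm, ← local_time_density_general hW ht hℓ a,
    Measure.map_apply (hL.meas t a) hAm]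
  rfl
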